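/- For an integer n ≥ 1, define f_n(x) = ∫_0^x sin(ns)/(2·sin(s)) ds (the integrand being extended continuously by the value n/2 at s = 0). Then for every integer n ≥ 4 and every x ∈ [π/n, π/2], one has f_n(x) ≥ 1/2. -/

import Mathlib

open Real intervalIntegral

noncomputable def fIntitem (n : ℕ) (x : ℝ) : ℝ :=
  ∫ s in (0:ℝ)..x, Real.sin (n * s) / (2 * Real.sin s)

/-!
Since `sin s ≤ s`, the first lobe contributes at least `(∫₀^π sinc) / 2`, and integrating
`sinc (2u) = cos u * sinc u ≥ cos u * (1 - u² / 6)` bounds this below by `4/3 - π²/24 ≥ 11/12`.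
Past `π / n`, integration by parts with the antiderivative `(1 - cos (n s)) / n ≥ 0` of `sin (n s)`
shows that at most `1 / (n sin (π / n))` is lost, which is at most `5/12` once `n ≥ 3`.
For `n ≤ 2` nothing lies strictly between `π / n` and `π / 2`.
-/

lemma pi_sq_lt_ten : π ^ 2 < 10 := by
  nlinarith [pi_lt_d2, pi_pos]

section Sinc

lemma sinc_pos_of_mem_Ioo {x : ℝ} (hx : x ∈ Set.Ioo (-π) π) : 0 < sinc x := by
  rcases lt_trichotomy x 0 with hneg | rfl | hpos
  · rw [sinc_of_ne_zero hneg.ne]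
    exact div_pos_of_neg_of_neg (sin_neg_of_neg_of_neg_pi_lt hneg hx.1) hneg
  · simp
  · rw [sinc_of_ne_zero hpos.ne']
    exact div_pos (sin_pos_of_pos_of_lt_pi hpos hx.2) hpos

lemma one_sub_sq_div_six_le_sinc (x : ℝ) : 1 - x ^ 2 / 6 ≤ sinc x := by
  wlog hx : 0 ≤ x generalizing x
  · simpa using this (-x) (by linarith)
  rcases hx.eq_or_lt with rfl | hpos
  · simp
  rw [sinc_of_ne_zero hpos.ne', le_div_iff₀ hpos]
  linarith [sin_ge_sub_cube hx]

lemma sinc_two_mul (x : ℝ) : sinc (2 * x) = cos x * sinc x := by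
  rcases eq_or_ne x 0 with rfl | hx
  · simp
  rw [sinc_of_ne_zero hx, sinc_of_ne_zero (by positivity), sin_two_mul]
  field_simp

lemma integral_cos_mul_one_sub_sq_div_six (a : ℝ) :
    ∫ u in 0..a, cos u * (1 - u ^ 2 / 6) = sin a * (4 / 3 - a ^ 2 / 6) - a * cos a / 3 := by
  have hderiv (u : ℝ) : HasDerivAt (fun u ↦ sin u * (4 / 3 - u ^ 2 / 6) - u * cos u / 3)
      (cos u * (1 - u ^ 2 / 6)) u := by
    convert! ((hasDerivAt_sin u).mul (((hasDerivAt_pow 2 u).div_const 6).const_sub (4 / 3))).sub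
      (((hasDerivAt_id' u).mul (hasDerivAt_cos u)).div_const 3) using 1
    norm_num
    ring
  rw [integral_eq_sub_of_hasDerivAt (fun u _ ↦ hderiv u)
    (Continuous.intervalIntegrable (by fun_prop) _ _)]
  simp

lemma le_integral_sinc_zero_pi : 8 / 3 - π ^ 2 / 12 ≤ ∫ t in 0..π, sinc t := by
  calc 8 / 3 - π ^ 2 / 12
      = 2 * ∫ u in 0..π / 2, cos u * (1 - u ^ 2 / 6) := by
        rw [integral_cos_mul_one_sub_sq_div_six, sin_pi_div_two, cos_pi_div_two]
        ring
    _ ≤ 2 * ∫ u in 0..π / 2, sinc (2 * u) := by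
        gcongr
        refine integral_mono_on (by positivity) (Continuous.intervalIntegrable (by fun_prop) _ _)
          (Continuous.intervalIntegrable (by fun_prop) _ _) fun u hu ↦ ?_
        have hcos : 0 ≤ cos u := cos_nonneg_of_mem_Icc ⟨by linarith [hu.1, pi_pos], hu.2⟩
        rw [sinc_two_mul]
        gcongr
        exact one_sub_sq_div_six_le_sinc u
    _ = ∫ t in 0..π, sinc t := by
        rw [mul_integral_comp_mul_left, mul_zero, mul_div_cancel₀ π two_ne_zero]

end Sinc

section Kernel

variable {ν a b x : ℝ}

lemma sin_mul_div_two_mul_sin_eq_sinc (ν : ℝ) (hx : x ≠ 0) :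
    sin (ν * x) / (2 * sin x) = ν * sinc (ν * x) / (2 * sinc x) := by
  rcases eq_or_ne ν 0 with rfl | hν
  · simp
  rw [sinc_of_ne_zero hx, sinc_of_ne_zero (mul_ne_zero hν hx)]
  field_simp

lemma intervalIntegrable_sin_mul_div_two_mul_sin (ν : ℝ)
    (ha : a ∈ Set.Ioo (-π) π) (hb : b ∈ Set.Ioo (-π) π) :
    IntervalIntegrable (fun s ↦ sin (ν * s) / (2 * sin s)) MeasureTheory.volume a b := by
  have hcont : ContinuousOn (fun s ↦ ν * sinc (ν * s) / (2 * sinc s)) (Set.uIcc a b) := by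
    refine ContinuousOn.div (by fun_prop) (by fun_prop) fun s hs ↦ ?_
    have := sinc_pos_of_mem_Ioo (Set.ordConnected_Ioo.uIcc_subset ha hb hs)
    positivity
  refine hcont.intervalIntegrable.congr_ae (MeasureTheory.ae_restrict_of_ae ?_)
  filter_upwards [MeasureTheory.Measure.ae_ne MeasureTheory.volume 0] with s hs
  exact (sin_mul_div_two_mul_sin_eq_sinc ν hs).symm

lemma half_integral_sinc_le_integral_sin_mul_div_two_mul_sin (hν : 0 ≤ ν) (hx : x ∈ Set.Ico 0 π)
    (hνx : ν * x ≤ π) :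
    (∫ t in 0..ν * x, sinc t) / 2 ≤ ∫ s in 0..x, sin (ν * s) / (2 * sin s) := by
  calc (∫ t in 0..ν * x, sinc t) / 2
      = ∫ s in 0..x, ν * sinc (ν * s) / 2 := by
        rw [integral_div, integral_const_mul, mul_integral_comp_mul_left, mul_zero]
    _ ≤ ∫ s in 0..x, sin (ν * s) / (2 * sin s) := by
        refine integral_mono_on_of_le_Ioo hx.1 (Continuous.intervalIntegrable (by fun_prop) _ _)
          (intervalIntegrable_sin_mul_div_two_mul_sin ν (by simp [pi_pos])
            ⟨by linarith [hx.1, pi_pos], hx.2⟩) fun s hs ↦ ?_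
        have hs_pos : 0 < s := hs.1
        have hsin_pos : 0 < sin s := sin_pos_of_pos_of_lt_pi hs_pos (hs.2.trans hx.2)
        have hsin_nonneg : 0 ≤ sin (ν * s) :=
          sin_nonneg_of_nonneg_of_le_pi (by positivity)
            ((mul_le_mul_of_nonneg_left hs.2.le hν).trans hνx)
        rcases hν.eq_or_lt with rfl | hν_pos
        · simp
        calc ν * sinc (ν * s) / 2 = sin (ν * s) / (2 * s) := by
              rw [sinc_of_ne_zero (by positivity)]
              field_simp
          _ ≤ sin (ν * s) / (2 * sin s) := by
              gcongr
              exact sin_le hs_pos.le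

lemma hasDerivAt_one_sub_cos_mul_div_sin (hν : ν ≠ 0) (hx : sin x ≠ 0) :
    HasDerivAt (fun s ↦ (1 - cos (ν * s)) / (2 * ν * sin s))
      (sin (ν * x) / (2 * sin x) - (1 - cos (ν * x)) * cos x / (2 * ν * sin x ^ 2)) x := by
  convert! (((hasDerivAt_id' x).const_mul ν).cos.const_sub 1).div
    ((hasDerivAt_sin x).const_mul (2 * ν)) (by positivity) using 1
  field_simp

lemma neg_inv_le_integral_sin_mul_div_two_mul_sin (hν : 0 < ν) (ha : 0 < a) (hab : a ≤ b)
    (hb : b ≤ π / 2) :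
    -(ν * sin a)⁻¹ ≤ ∫ s in a..b, sin (ν * s) / (2 * sin s) := by
  have hsin {s : ℝ} (hs : s ∈ Set.Icc a b) : 0 < sin s :=
    sin_pos_of_pos_of_lt_pi (ha.trans_le hs.1) (by linarith [hs.2, pi_pos])
  have hderiv {s : ℝ} (hs : s ∈ Set.Icc a b) :=
    hasDerivAt_one_sub_cos_mul_div_sin hν.ne' (hsin hs).ne'
  have hone_sub_cos (s : ℝ) : 0 ≤ 1 - cos (ν * s) := sub_nonneg.2 (cos_le_one _)
  have hintegrable : MeasureTheory.IntegrableOn (fun s ↦ sin (ν * s) / (2 * sin s))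
      (Set.Icc a b) :=
    ContinuousOn.integrableOn_Icc <| ContinuousOn.div (by fun_prop) (by fun_prop) fun s hs ↦
      mul_ne_zero two_ne_zero (hsin hs).ne'
  have hparts := sub_le_integral_of_hasDeriv_right_of_le hab
    (fun s hs ↦ (hderiv hs).continuousAt.continuousWithinAt)
    (fun s hs ↦ (hderiv (Set.Ioo_subset_Icc_self hs)).hasDerivWithinAt) hintegrable fun s hs ↦ by
      have hcos : 0 ≤ cos s := cos_nonneg_of_mem_Icc
        ⟨by linarith [hs.1, pi_pos], hs.2.le.trans hb⟩
      have := hone_sub_cos s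
      exact sub_le_self _ (by positivity)
  have hright : 0 ≤ (1 - cos (ν * b)) / (2 * ν * sin b) := by
    have := hsin (Set.right_mem_Icc.2 hab)
    have := hone_sub_cos b
    positivity
  have hleft : (1 - cos (ν * a)) / (2 * ν * sin a) ≤ (ν * sin a)⁻¹ := by
    have := hsin (Set.left_mem_Icc.2 hab)
    calc (1 - cos (ν * a)) / (2 * ν * sin a) ≤ 2 / (2 * ν * sin a) := by
          gcongr
          linarith [neg_one_le_cos (ν * a)]
      _ = (ν * sin a)⁻¹ := by field_simp
  linarith

lemma eleven_div_twelve_le_integral_sin_mul_div_two_mul_sin (hν : 1 < ν) :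
    11 / 12 ≤ ∫ s in 0..π / ν, sin (ν * s) / (2 * sin s) := by
  have hcancel : ν * (π / ν) = π := mul_div_cancel₀ π (by positivity)
  have hlobe := half_integral_sinc_le_integral_sin_mul_div_two_mul_sin (by positivity)
    ⟨by positivity, div_lt_self pi_pos hν⟩ hcancel.le
  rw [hcancel] at hlobe
  linarith [le_integral_sinc_zero_pi, pi_sq_lt_ten]

lemma twelve_div_five_le_mul_sin_pi_div (hν : 3 ≤ ν) : 12 / 5 ≤ ν * sin (π / ν) := by
  have hsq : (π / ν) ^ 2 ≤ 10 / 9 := by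
    calc (π / ν) ^ 2 = π ^ 2 / ν ^ 2 := div_pow π ν 2
      _ ≤ 10 / 3 ^ 2 := by gcongr; exact pi_sq_lt_ten.le
      _ = 10 / 9 := by norm_num
  calc (12 / 5 : ℝ) ≤ 3 * (1 - 10 / 9 / 6) := by norm_num
    _ ≤ π * (1 - (π / ν) ^ 2 / 6) := by gcongr; exact pi_gt_three.le
    _ ≤ π * sinc (π / ν) := by gcongr; exact one_sub_sq_div_six_le_sinc _
    _ = ν * sin (π / ν) := by
        rw [sinc_of_ne_zero (by positivity)]
        field_simp

end Kernel

lemma fIntitem_add_integral (n : ℕ) {a b : ℝ} (ha : a ∈ Set.Ioo (-π) π) (hb : b ∈ Set.Ioo (-π) π) :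
    fIntitem n a + ∫ s in a..b, sin (n * s) / (2 * sin s) = fIntitem n b :=
  integral_add_adjacent_intervals
    (intervalIntegrable_sin_mul_div_two_mul_sin n (by simp [pi_pos]) ha)
    (intervalIntegrable_sin_mul_div_two_mul_sin n ha hb)

theorem fn_ge_half_general (n : ℕ) (hn : n ≠ 0)
    (x : ℝ) (hx : x ∈ Set.Icc (Real.pi / n) (Real.pi / 2)) :
    fIntitem n x ≥ 1 / 2 := by
  have hn_two : 2 ≤ n := by
    have := (div_le_div_iff_of_pos_left pi_pos (by positivity) two_pos).1 (hx.1.trans hx.2)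
    exact_mod_cast this
  have hn_one : (1 : ℝ) < n := by exact_mod_cast hn_two
  have hlobe : 11 / 12 ≤ fIntitem n (π / n) :=
    eleven_div_twelve_le_integral_sin_mul_div_two_mul_sin hn_one
  obtain rfl | hn_three := hn_two.eq_or_lt
  · obtain rfl : x = π / (2 : ℕ) := le_antisymm (mod_cast hx.2) hx.1
    linarith
  have hpos : 0 < π / n := by positivity
  have hmem {y : ℝ} (hy : y ∈ Set.Icc (π / n) (π / 2)) : y ∈ Set.Ioo (-π) π :=
    ⟨by linarith [hy.1, pi_pos], by linarith [hy.2, pi_pos]⟩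
  have hsplit := fIntitem_add_integral n (hmem ⟨le_rfl, hx.1.trans hx.2⟩) (hmem hx)
  have htail := neg_inv_le_integral_sin_mul_div_two_mul_sin (by positivity) hpos hx.1 hx.2
  have hloss : (n * sin (π / n))⁻¹ ≤ (12 / 5 : ℝ)⁻¹ :=
    inv_anti₀ (by norm_num) (twelve_div_five_le_mul_sin_pi_div (mod_cast hn_three))
  linarith

theorem fn_ge_half (n : ℕ) (hn : 4 ≤ n)
    (x : ℝ) (hx : x ∈ Set.Icc (Real.pi / n) (Real.pi / 2)) :
    fIntitem n x ≥ 1 / 2 :=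
  fn_ge_half_general n (by positivity) x hx
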